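/- arXiv:1105.1395 — 3 statements merged into one kernel-verified Lean document; each statement's English description precedes it below -/
import Mathlib

section
/- Let L be a finite lattice and φ ∈ M_1(L). For every g : 𝓛 → ℝ, the Fréchet bound B_φ(g) = min{Σ_{V ∈ 𝓛} f_Φ(V) g(V) : Φ ∈ M_∞(𝓛), Π(Φ) = φ} equals the dual value S^φ(g) = max{Σ_{x ∈ L} r_x φ(x) : r : L → ℝ with Σ_{x ∈ V} r_x ≤ g(V) for every V ∈ 𝓛}. -/
/-!
On `𝓛` a function is completely monotone exactly when its Möbius inverse `f` is nonnegative, since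
a successive difference of `Φ` at `W` along `U₁, …, Uₖ` is the sum of `f` over those `V ⊇ W` that
contain no `Uᵢ` (`succDiffU_eq`, `minf_iff`). As `⟨x⟩* ⊆ V ↔ x ∈ V`, the Fréchet bound is the value
of the linear program that minimises `∑ f V * g V` subject to `f ≥ 0` and `∑_{V ∋ x} f V = φ x`
(`Feasible`), and the other side is its dual.

The primal program is feasible: a nonnegative monotone `φ` is a nonnegative combination of
indicators of up-sets (`exists_feasible`). Each `V ∈ 𝓛` contains `⊤`, so feasible `f` are bounded by
`φ ⊤` and the minimum `t` is attained by compactness (`exists_min`). Weak duality is an exchange of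
sums. If no dual solution had value at least `t`, Farkas' lemma (`farkas`) would provide weights
`lam V ≥ 0` and `mu ≥ 0` with `∑_{V ∋ x} lam V = mu * φ x` and `∑ lam V * g V = mu * t - 1`. For
`mu > 0`, `lam / mu` beats the minimum; for `mu = 0`, evaluation at `⊤` forces `lam = 0`, which is
absurd.
-/

attribute [local instance 50] Classical.propDecidable

/-- `U` is a member of `𝓛`: a nonempty dual order ideal (up-set) of `L`. -/
def MemL {L : Type*} [Lattice L] (U : Finset L) : Prop :=
  (∀ ⦃x y : L⦄, x ∈ U → x ≤ y → y ∈ U) ∧ U.Nonempty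

/-- The family `𝓛` of nonempty up-sets of `L`, as a finset of finsets. -/
noncomputable def LFam (L : Type*) [Lattice L] [Fintype L] : Finset (Finset L) :=
  Finset.univ.filter (fun U => MemL U)

/-- The successive difference operator on `𝓛` (ordered by reverse inclusion, so that
the meet of two up-sets is their union): `∇_U Φ(W) = Φ(W) − Φ(W ⊓ U) = Φ(W) − Φ(W ∪ U)`,
iterated over a list. -/
def succDiffU {L : Type*} [Lattice L] [DecidableEq L]
    (Φ : Finset L → ℝ) (l : List (Finset L)) : Finset L → ℝ :=
  l.foldl (fun Ψ U => fun W => Ψ W - Ψ (W ∪ U)) Φ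

/-- `Φ ∈ M_∞(𝓛)`: `Φ` is nonnegative and completely monotone on `𝓛`
(the empty list gives nonnegativity of `Φ` itself). -/
def Minf {L : Type*} [Lattice L] [DecidableEq L] (Φ : Finset L → ℝ) : Prop :=
  ∀ l : List (Finset L), (∀ U ∈ l, MemL U) → ∀ W : Finset L, MemL W →
    0 ≤ succDiffU Φ l W

/-- The principal up-set `⟨x⟩* = {y ∈ L : y ≥ x}`. -/
noncomputable def pUp {L : Type*} [Lattice L] [Fintype L] (x : L) : Finset L :=
  Finset.univ.filter (fun y => x ≤ y)

/-- The up-set `⟨A⟩*` generated by `A ⊆ L`. -/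
noncomputable def upGen {L : Type*} [Lattice L] [Fintype L] (A : Finset L) : Finset L :=
  Finset.univ.filter (fun y => ∃ a ∈ A, a ≤ y)

/-- `φ ∈ M_1(L)`: `φ` is nonnegative and monotone. -/
def M1 {L : Type*} [Lattice L] (φ : L → ℝ) : Prop :=
  (∀ x, 0 ≤ φ x) ∧ Monotone φ

/-- `f` is the Möbius inverse of `Φ` on `𝓛`: `Φ(U) = Σ_{V ⪯ U} f(V)`,
where `V ⪯ U` means `U ⊆ V`. -/
def IsMobiusInvL {L : Type*} [Lattice L] [Fintype L] (Φ f : Finset L → ℝ) : Prop :=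
  ∀ U : Finset L, MemL U → Φ U = ∑ V ∈ (LFam L).filter (fun V => U ⊆ V), f V

/-- Farkas' lemma for finitely many linear functionals on a real vector space, proved by induction
on their number (Bartl's argument). -/
lemma farkas {W ι : Type*} [AddCommGroup W] [Module ℝ W] (s : Finset ι) :
    ∀ (a : ι → W →ₗ[ℝ] ℝ) (b : W →ₗ[ℝ] ℝ),
      (∀ x, (∀ i ∈ s, a i x ≤ 0) → b x ≤ 0) →
      ∃ lam : ι → ℝ, (∀ i ∈ s, 0 ≤ lam i) ∧ ∀ x, b x = ∑ i ∈ s, lam i * a i x := by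
  induction s using Finset.induction_on with
  | empty =>
    intro a b h
    refine ⟨0, by simp, fun x => ?_⟩
    have h1 := h x (by simp)
    have h2 := h (-x) (by simp)
    rw [map_neg] at h2
    simp only [Finset.sum_empty]
    linarith
  | insert j s hj ih =>
    intro a b h
    by_cases hb : ∀ x, (∀ i ∈ s, a i x ≤ 0) → b x ≤ 0
    · obtain ⟨lam, h0, h1⟩ := ih a b hb
      refine ⟨fun i => if i = j then 0 else lam i, ?_, ?_⟩
      · intro i hi
        dsimp only
        split_ifs with hij
        · exact le_rfl
        · exact h0 i (Finset.mem_of_mem_insert_of_ne hi hij)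
      · intro x
        rw [Finset.sum_insert hj, h1]
        simp only [if_true, zero_mul, zero_add]
        refine Finset.sum_congr rfl fun i hi => ?_
        rw [if_neg (ne_of_mem_of_not_mem hi hj)]
    · push Not at hb
      obtain ⟨x0, hx0, hbx0⟩ := hb
      have hc : 0 < a j x0 := by
        by_contra hcon
        refine absurd (h x0 fun i hi => ?_) (not_le.2 hbx0)
        rcases Finset.mem_insert.1 hi with rfl | hi
        · exact not_lt.1 hcon
        · exact hx0 i hi
      -- Project along `x0` onto the kernel of `a j`, which removes the functional `a j`.
      obtain ⟨lam, h0, h1⟩ := ih (fun i => a i - (a i x0 / a j x0) • a j)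
        (b - (b x0 / a j x0) • a j) (by
          intro x hx
          have hy := h (x - (a j x / a j x0) • x0) (by
            intro i hi
            rcases Finset.mem_insert.1 hi with rfl | hi
            · simp [hc.ne']
            · have := hx i hi
              simp only [LinearMap.sub_apply, LinearMap.smul_apply, smul_eq_mul, map_sub,
                map_smul] at this ⊢
              calc _ = _ := by ring
                _ ≤ 0 := this)
          simp only [LinearMap.sub_apply, LinearMap.smul_apply, smul_eq_mul, map_sub,
            map_smul] at hy ⊢
          calc _ = _ := by ring
            _ ≤ 0 := hy)
      refine ⟨fun i => if i = j then (b x0 - ∑ i ∈ s, lam i * a i x0) / a j x0 else lam i, ?_, ?_⟩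
      · intro i hi
        dsimp only
        split_ifs with hij
        · refine div_nonneg ?_ hc.le
          have : ∑ i ∈ s, lam i * a i x0 ≤ 0 := Finset.sum_nonpos fun i hi =>
            mul_nonpos_of_nonneg_of_nonpos (h0 i hi) (hx0 i hi)
          linarith
        · exact h0 i (Finset.mem_of_mem_insert_of_ne hi hij)
      · intro x
        have h2 := h1 x
        have h3 : ∑ i ∈ s, (if i = j then (b x0 - ∑ i ∈ s, lam i * a i x0) / a j x0 else lam i)
            * a i x = ∑ i ∈ s, lam i * a i x := by
          refine Finset.sum_congr rfl fun i hi => ?_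
          rw [if_neg (ne_of_mem_of_not_mem hi hj)]
        rw [Finset.sum_insert hj, h3]
        simp only [if_true]
        simp only [LinearMap.sub_apply, LinearMap.smul_apply, smul_eq_mul] at h2
        have h4 : ∑ i ∈ s, lam i * (a i x - a i x0 / a j x0 * a j x)
            = ∑ i ∈ s, lam i * a i x - (∑ i ∈ s, lam i * a i x0) * (a j x / a j x0) := by
          rw [Finset.sum_mul, ← Finset.sum_sub_distrib]
          exact Finset.sum_congr rfl fun i _ => by ring
        rw [h4] at h2
        linear_combination h2

section
variable {L : Type*} [Lattice L]

lemma MemL.top_mem [BoundedOrder L] {V : Finset L} (hV : MemL V) : ⊤ ∈ V := by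
  obtain ⟨x, hx⟩ := hV.2
  exact hV.1 hx le_top

lemma MemL.union [DecidableEq L] {U V : Finset L} (hU : MemL U) (hV : MemL V) :
    MemL (U ∪ V) := by
  refine ⟨fun x y hx hxy => ?_, hU.2.mono Finset.subset_union_left⟩
  rcases Finset.mem_union.1 hx with h | h
  · exact Finset.mem_union_left _ (hU.1 h hxy)
  · exact Finset.mem_union_right _ (hV.1 h hxy)

variable [Fintype L]

lemma mem_LFam {U : Finset L} : U ∈ LFam L ↔ MemL U := by simp [LFam]

lemma pUp_memL (x : L) : MemL (pUp x) := by
  refine ⟨fun a b ha hab => ?_, x, by simp [pUp]⟩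
  simp only [pUp, Finset.mem_filter, Finset.mem_univ, true_and] at ha ⊢
  exact ha.trans hab

lemma pUp_subset {x : L} {V : Finset L} (hV : MemL V) : pUp x ⊆ V ↔ x ∈ V := by
  refine ⟨fun h => h (by simp [pUp]), fun h y hy => hV.1 h ?_⟩
  simpa [pUp] using hy

/-- Successive differences in terms of the Möbius inverse; the predicate `P` records the
differences already taken. -/
lemma succDiffU_eq [DecidableEq L] (f : Finset L → ℝ) (l : List (Finset L)) :
    ∀ (P : Finset L → Prop) (Ψ : Finset L → ℝ), (∀ U ∈ l, MemL U) →
      (∀ W, MemL W → Ψ W = ∑ V ∈ LFam L, if W ⊆ V ∧ P V then f V else 0) →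
      ∀ W, MemL W → succDiffU Ψ l W =
        ∑ V ∈ LFam L, if W ⊆ V ∧ P V ∧ ∀ U ∈ l, ¬ U ⊆ V then f V else 0 := by
  induction l with
  | nil =>
    intro P Ψ _ h W hW
    simpa [succDiffU] using h W hW
  | cons U l ih =>
    intro P Ψ hl h W hW
    have hU : MemL U := hl U (by simp)
    have := ih (fun V => P V ∧ ¬ U ⊆ V) (fun W => Ψ W - Ψ (W ∪ U))
      (fun U' h' => hl U' (by simp [h'])) (by
        intro W hW
        rw [h W hW, h _ (hW.union hU), ← Finset.sum_sub_distrib]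
        refine Finset.sum_congr rfl fun V _ => ?_
        by_cases h1 : W ⊆ V <;> by_cases h2 : P V <;> by_cases h3 : U ⊆ V <;>
          simp [Finset.union_subset_iff, h1, h2, h3]) W hW
    change succDiffU (fun W => Ψ W - Ψ (W ∪ U)) l W = _
    rw [this]
    refine Finset.sum_congr rfl fun V _ => ?_
    simp only [List.forall_mem_cons, and_assoc]

lemma minf_iff [DecidableEq L] {Φ f : Finset L → ℝ} (h : IsMobiusInvL Φ f) :
    Minf Φ ↔ ∀ V ∈ LFam L, 0 ≤ f V := by
  have key := fun l hl => succDiffU_eq f l (fun _ => True) Φ hl (by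
    intro W hW
    rw [h W hW, Finset.sum_filter]
    refine Finset.sum_congr rfl fun V _ => ?_
    simp only [and_true]
    congr)
  constructor
  · intro hm V hV
    -- Differences along all up-sets not contained in `V` isolate the term `f V`.
    let l := ((LFam L).filter (fun U => ¬ U ⊆ V)).toList
    have hl : ∀ U, U ∈ l ↔ MemL U ∧ ¬ U ⊆ V := by
      intro U
      simp [l, mem_LFam]
    have h0 := hm l (fun U hU => ((hl U).1 hU).1) V (mem_LFam.1 hV)
    rw [key l (fun U hU => ((hl U).1 hU).1) V (mem_LFam.1 hV),
      Finset.sum_eq_single V] at h0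
    · rwa [if_pos] at h0
      exact ⟨subset_rfl, trivial, fun U hU => ((hl U).1 hU).2⟩
    · intro V' hV' hne
      rw [if_neg]
      rintro ⟨h1, -, h2⟩
      refine h2 V' ((hl V').2 ⟨mem_LFam.1 hV', fun h3 => hne (h3.antisymm h1)⟩) subset_rfl
    · exact fun hc => absurd hV hc
  · intro hf l hl W hW
    rw [key l hl W hW]
    refine Finset.sum_nonneg fun V hV => ?_
    split_ifs
    · exact hf V hV
    · exact le_rfl

/-- Feasible solutions of the primal linear program: nonnegative weights on `𝓛` whose total over
the up-sets containing `x` is `φ x`. -/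
def Feasible (φ : L → ℝ) (f : Finset L → ℝ) : Prop :=
  (∀ V ∈ LFam L, 0 ≤ f V) ∧ ∀ x, ∑ V ∈ LFam L, (if x ∈ V then f V else 0) = φ x

/-- The layer-cake decomposition of a nonnegative monotone function: subtract the smallest nonzero
value on the support and recurse on the size of the support. -/
lemma exists_feasible (n : ℕ) : ∀ φ : L → ℝ, M1 φ →
    (Finset.univ.filter (fun x => φ x ≠ 0)).card ≤ n → ∃ f, Feasible φ f := by
  induction n with
  | zero =>
    intro φ _ h
    refine ⟨0, fun _ _ => le_rfl, fun x => ?_⟩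
    have h1 := Finset.card_eq_zero.1 (Nat.le_zero.1 h)
    have h2 : x ∉ Finset.univ.filter (fun x => φ x ≠ 0) := by rw [h1]; simp
    have h3 : φ x = 0 := by simpa using h2
    simp [h3]
  | succ n ih =>
    intro φ hφ h
    set U := Finset.univ.filter (fun x => φ x ≠ 0) with hUdef
    have memU : ∀ x, x ∈ U ↔ φ x ≠ 0 := fun x => by simp [hUdef]
    rcases U.eq_empty_or_nonempty with hU | hU
    · refine ih φ hφ ?_
      rw [← hUdef, hU]
      simp
    obtain ⟨m, hmU, hm⟩ := U.exists_min_image φ hU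
    have hmpos : 0 < φ m := lt_of_le_of_ne (hφ.1 m) ((memU m).1 hmU).symm
    have hup : ∀ ⦃x y : L⦄, x ∈ U → x ≤ y → y ∈ U := by
      intro x y hx hxy
      rw [memU]
      exact (hmpos.trans_le ((hm x hx).trans (hφ.2 hxy))).ne'
    have hUL : U ∈ LFam L := mem_LFam.2 ⟨hup, hU⟩
    obtain ⟨f, hf0, hf⟩ := ih (fun x => φ x - if x ∈ U then φ m else 0) (by
      constructor
      · intro x
        dsimp only
        split_ifs with hx
        · linarith [hm x hx]
        · linarith [hφ.1 x]
      · intro x y hxy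
        have h1 := hφ.2 hxy
        dsimp only
        by_cases hx : x ∈ U
        · rw [if_pos hx, if_pos (hup hx hxy)]
          linarith
        · rw [if_neg hx]
          have hx0 : φ x = 0 := by
            by_contra hc
            exact hx ((memU x).2 hc)
          split_ifs with hy
          · linarith [hm y hy]
          · linarith) (by
      refine Nat.lt_succ_iff.1 (lt_of_lt_of_le (Finset.card_lt_card ?_) h)
      refine Finset.ssubset_iff_of_subset ?_ |>.2 ⟨m, hmU, ?_⟩
      · intro x hx
        by_contra hxU
        have h0 : φ x = 0 := by
          by_contra hc
          exact hxU ((memU x).2 hc)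
        simp [hxU, h0] at hx
      · simp [hmU])
    refine ⟨fun V => f V + if V = U then φ m else 0, ?_, ?_⟩
    · intro V hV
      dsimp only
      split_ifs
      · exact add_nonneg (hf0 V hV) hmpos.le
      · simpa using hf0 V hV
    · intro x
      have h1 : ∀ V, (if x ∈ V then f V + (if V = U then φ m else 0) else 0)
          = (if x ∈ V then f V else 0) + if V = U then (if x ∈ U then φ m else 0) else 0 := by
        intro V
        by_cases hVU : V = U
        · rw [hVU]
          by_cases hx : x ∈ U <;> simp [hx]
        · simp [hVU]
      simp only [h1]
      rw [Finset.sum_add_distrib, hf x, Finset.sum_ite_eq', if_pos hUL]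
      ring

lemma Feasible.le_top [BoundedOrder L] {φ : L → ℝ} {f : Finset L → ℝ} (h : Feasible φ f)
    {V : Finset L} (hV : V ∈ LFam L) : f V ≤ φ ⊤ := by
  rw [← h.2 ⊤]
  have h1 : f V = if ⊤ ∈ V then f V else 0 := by rw [if_pos (mem_LFam.1 hV).top_mem]
  rw [h1]
  refine Finset.single_le_sum (f := fun V => if ⊤ ∈ V then f V else 0) ?_ hV
  intro V' hV'
  split_ifs
  · exact h.1 V' hV'
  · exact le_rfl

lemma exists_min [BoundedOrder L] (φ : L → ℝ) (hφ : M1 φ) (g : Finset L → ℝ) :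
    ∃ f, Feasible φ f ∧ ∀ f', Feasible φ f' →
      ∑ V ∈ LFam L, f V * g V ≤ ∑ V ∈ LFam L, f' V * g V := by
  -- Values outside `LFam L` are irrelevant, so they may be truncated to `0` to gain compactness.
  let K : Set (Finset L → ℝ) := Set.Icc 0 (fun _ => φ ⊤) ∩
    {f | ∀ x, ∑ V ∈ LFam L, (if x ∈ V then f V else 0) = φ x}
  have hK : IsCompact K := by
    refine isCompact_Icc.inter_right ?_
    rw [Set.ofPred_forall]
    refine isClosed_iInter fun x => isClosed_eq ?_ continuous_const
    refine continuous_finsetSum _ fun V _ => ?_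
    split_ifs
    · exact continuous_apply V
    · exact continuous_const
  have hcut : ∀ f, Feasible φ f → (fun V => if V ∈ LFam L then f V else 0) ∈ K := by
    intro f hf
    refine ⟨⟨fun V => ?_, fun V => ?_⟩, fun x => ?_⟩
    · dsimp only
      split_ifs with hV
      · exact hf.1 V hV
      · exact le_rfl
    · dsimp only
      split_ifs with hV
      · exact hf.le_top hV
      · exact hφ.1 ⊤
    · rw [← hf.2 x]
      exact Finset.sum_congr rfl fun V hV => by simp [hV]
  obtain ⟨f0, hf0⟩ := exists_feasible _ φ hφ le_rfl
  obtain ⟨f, hfK, hmin⟩ := hK.exists_isMinOn ⟨_, hcut f0 hf0⟩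
    (f := fun f => ∑ V ∈ LFam L, f V * g V)
    (continuous_finsetSum _ fun V _ => (continuous_apply V).mul continuous_const).continuousOn
  refine ⟨f, ⟨fun V _ => hfK.1.1 V, hfK.2⟩, fun f' hf' => ?_⟩
  refine (hmin (hcut f' hf')).trans (le_of_eq ?_)
  exact Finset.sum_congr rfl fun V hV => by simp [hV]

lemma sum_exchange {φ : L → ℝ} {f : Finset L → ℝ}
    (h : ∀ x, ∑ V ∈ LFam L, (if x ∈ V then f V else 0) = φ x) (r : L → ℝ) :
    ∑ x, r x * φ x = ∑ V ∈ LFam L, f V * ∑ x ∈ V, r x := by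
  simp only [← h, Finset.mul_sum]
  rw [Finset.sum_comm]
  refine Finset.sum_congr rfl fun V _ => ?_
  simp only [mul_ite, mul_zero]
  rw [← Finset.sum_filter]
  simp [mul_comm]

lemma weak_duality {φ : L → ℝ} {f g : Finset L → ℝ} (hf : Feasible φ f) {r : L → ℝ}
    (hr : ∀ V ∈ LFam L, (∑ x ∈ V, r x) ≤ g V) :
    ∑ x, r x * φ x ≤ ∑ V ∈ LFam L, f V * g V := by
  rw [sum_exchange hf.2]
  exact Finset.sum_le_sum fun V hV => mul_le_mul_of_nonneg_left (hr V hV) (hf.1 V hV)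

lemma strong_duality [BoundedOrder L] {φ : L → ℝ} {g : Finset L → ℝ} {t : ℝ}
    (ht : ∀ f, Feasible φ f → t ≤ ∑ V ∈ LFam L, f V * g V) :
    ∃ r : L → ℝ, (∀ V ∈ LFam L, (∑ x ∈ V, r x) ≤ g V) ∧ t ≤ ∑ x, r x * φ x := by
  by_contra hno
  push Not at hno
  -- Homogenise the dual system with an extra variable `s`; infeasibility says that its
  -- inequalities force `s ≤ 0`. The index `none` carries `s * t ≤ ∑ x, r x * φ x`.
  let p (x : L) : ((L → ℝ) × ℝ) →ₗ[ℝ] ℝ := LinearMap.proj x ∘ₗ LinearMap.fst ℝ (L → ℝ) ℝ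
  let q : ((L → ℝ) × ℝ) →ₗ[ℝ] ℝ := LinearMap.snd ℝ (L → ℝ) ℝ
  let a : Option (Finset L) → ((L → ℝ) × ℝ) →ₗ[ℝ] ℝ := fun o =>
    o.elim (t • q - ∑ x, φ x • p x) (fun V => ∑ x ∈ V, p x - g V • q)
  have ha1 : ∀ r s, a none (r, s) = t * s - ∑ x, φ x * r x := by
    intro r s
    simp [a, p, q, LinearMap.sum_apply]
  have ha2 : ∀ V r s, a (some V) (r, s) = ∑ x ∈ V, r x - g V * s := by
    intro V r s
    simp [a, p, q, LinearMap.sum_apply]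
  obtain ⟨lam, h0, h1⟩ := farkas (Finset.insertNone (LFam L)) a q (by
    rintro ⟨r, s⟩ h
    by_contra hs
    have hs : 0 < s := not_le.1 hs
    refine absurd (hno (fun x => r x / s) fun V hV => ?_) (not_lt.2 ?_)
    · have := h (some V) (by simpa using hV)
      rw [ha2] at this
      rw [← Finset.sum_div, div_le_iff₀ hs]
      linarith
    · have := h none (by simp)
      rw [ha1] at this
      have h2 : ∑ x, r x / s * φ x = (∑ x, φ x * r x) / s := by
        rw [Finset.sum_div]
        exact Finset.sum_congr rfl fun x _ => by ring
      rw [h2, le_div_iff₀ hs]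
      linarith)
  set mu := lam none with hmu
  have hmu0 : 0 ≤ mu := h0 none (by simp)
  have hlam : ∀ V ∈ LFam L, 0 ≤ lam (some V) := fun V hV => h0 _ (by simpa using hV)
  have h2 : ∀ (r : L → ℝ) (s : ℝ), s = mu * (t * s - ∑ x, φ x * r x)
      + ∑ V ∈ LFam L, lam (some V) * (∑ x ∈ V, r x - g V * s) := by
    intro r s
    have := h1 (r, s)
    rw [Finset.sum_insertNone, ha1] at this
    simp only [ha2] at this
    exact this
  have hval : ∑ V ∈ LFam L, lam (some V) * g V = mu * t - 1 := by
    have := h2 0 1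
    simp at this
    linarith
  have heq : ∀ x, ∑ V ∈ LFam L, (if x ∈ V then lam (some V) else 0) = mu * φ x := by
    intro x
    have := h2 (Pi.single x 1) 0
    simp [Pi.single_apply] at this
    linarith
  rcases hmu0.eq_or_lt with hz | hpos
  · have h3 := heq ⊤
    rw [← hz, zero_mul, Finset.sum_eq_zero_iff_of_nonneg] at h3
    · have h4 : ∑ V ∈ LFam L, lam (some V) * g V = 0 := by
        refine Finset.sum_eq_zero fun V hV => ?_
        have := h3 V hV
        rw [if_pos (mem_LFam.1 hV).top_mem] at this
        rw [this, zero_mul]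
      rw [h4, ← hz] at hval
      linarith
    · intro V hV
      split_ifs
      · exact hlam V hV
      · exact le_rfl
  · have h3 := ht (fun V => lam (some V) / mu)
      ⟨fun V hV => div_nonneg (hlam V hV) hpos.le, fun x => by
        rw [eq_comm, ← mul_right_inj' hpos.ne', ← heq x, Finset.mul_sum]
        refine Finset.sum_congr rfl fun V _ => ?_
        split_ifs
        · field_simp
        · simp⟩
    have h4 : ∑ V ∈ LFam L, lam (some V) / mu * g V = (mu * t - 1) / mu := by
      rw [← hval, Finset.sum_div]
      exact Finset.sum_congr rfl fun V _ => by ring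
    rw [h4, le_div_iff₀ hpos] at h3
    linarith

lemma mobius_pUp {Φ f : Finset L → ℝ} (h : IsMobiusInvL Φ f) (x : L) :
    Φ (pUp x) = ∑ V ∈ LFam L, if x ∈ V then f V else 0 := by
  rw [h _ (pUp_memL x), Finset.sum_filter]
  refine Finset.sum_congr rfl fun V hV => ?_
  simp only [pUp_subset (mem_LFam.1 hV)]

end

/-- LP duality for the Fréchet bound: for every `g : 𝓛 → ℝ`, the minimum of
`Σ_{V ∈ 𝓛} f_Φ(V) g(V)` over `Φ ∈ M_∞(𝓛)` with `Π(Φ) = φ` (where `f_Φ` is the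
Möbius inverse of `Φ` on `𝓛`) equals the maximum of `Σ_x r_x φ(x)` over `r : L → ℝ`
with `Σ_{x ∈ V} r_x ≤ g(V)` for every `V ∈ 𝓛`. -/
theorem stmt_7 {L : Type*} [Lattice L] [Fintype L] [BoundedOrder L] [DecidableEq L]
    (φ : L → ℝ) (hφ : M1 φ) (g : Finset L → ℝ) :
    ∃ t : ℝ,
      IsLeast {s : ℝ | ∃ Φ f : Finset L → ℝ, Minf Φ ∧ (∀ x : L, Φ (pUp x) = φ x) ∧
        IsMobiusInvL Φ f ∧ s = ∑ V ∈ LFam L, f V * g V} t ∧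
      IsGreatest {s : ℝ | ∃ r : L → ℝ, (∀ V ∈ LFam L, (∑ x ∈ V, r x) ≤ g V) ∧
        s = ∑ x : L, r x * φ x} t := by
  obtain ⟨f, hf, hmin⟩ := exists_min φ hφ g
  refine ⟨∑ V ∈ LFam L, f V * g V, ⟨?_, ?_⟩, ?_, ?_⟩
  · have hM : IsMobiusInvL (fun U => ∑ V ∈ (LFam L).filter (fun V => U ⊆ V), f V) f :=
      fun U _ => by
        simp only [Finset.sum_filter]
        refine Finset.sum_congr rfl fun V _ => ?_
        congr
    exact ⟨_, f, (minf_iff hM).2 hf.1, fun x => (mobius_pUp hM x).trans (hf.2 x), hM, rfl⟩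
  · rintro s ⟨Φ, f', hm, hp, hM, rfl⟩
    exact hmin f' ⟨(minf_iff hM).1 hm, fun x => (mobius_pUp hM x).symm.trans (hp x)⟩
  · obtain ⟨r, hr, hle⟩ := strong_duality hmin
    exact ⟨r, hr, hle.antisymm (weak_duality hf hr)⟩
  · rintro s ⟨r, hr, rfl⟩
    exact weak_duality hf hr
end

section
/- Let L be a finite lattice and φ ∈ M_1(L). For every tree G ∈ 𝒯 with vertex set contained in L, φ(G) ≤ B_φ(⟨G⟩*), where ⟨G⟩* is the up-set generated by the vertex set of G. -/
/-!
The tree is built up one vertex at a time. If `Φ` is completely monotone, a second-order difference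
at `⟨a ∨ b⟩*` in the directions `⟨a⟩*` and `⟨S⟩*`, where `b ∈ S`, gives
`Φ ⟨S ∪ {a}⟩* ≥ Φ ⟨S⟩* + φ a - φ (a ∨ b)` (`phi_upGen_insert`), since `⟨a ∨ b⟩*` is contained in
both `⟨a⟩*` and `⟨S⟩*`. Starting from one vertex and repeatedly crossing an edge `{a, b}` of the
tree that leaves the current set `S`, one exhausts the vertices by connectedness (`exists_grow`).
The edges crossed form a subset of the edge set, and any further edge would only lower `φ(G)`,
because `φ` is nonnegative.
-/

attribute [local instance 50] Classical.propDecidable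

/-- A tree in `𝒯`: a connected acyclic simple graph whose (nonempty) vertex set is a
subset of `L`, given by its vertex finset and edge finset. -/
structure FinTree (L : Type*) [Lattice L] where
  verts : Finset L
  edges : Finset (Sym2 L)
  nonempty : verts.Nonempty
  loopless : ∀ e ∈ edges, ¬ e.IsDiag
  edge_mem : ∀ e ∈ edges, ∀ x ∈ e, x ∈ verts
  connected : ∀ x ∈ verts, ∀ y ∈ verts,
    (SimpleGraph.fromEdgeSet (edges : Set (Sym2 L))).Reachable x y
  acyclic : (SimpleGraph.fromEdgeSet (edges : Set (Sym2 L))).IsAcyclic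

/-- `φ(G) = Σ_{a ∈ G} φ(a) − Σ_{{a,b} ∈ E(G)} φ(a ∨ b)` for a tree `G ∈ 𝒯`. -/
noncomputable def phiTree {L : Type*} [Lattice L] (φ : L → ℝ) (G : FinTree L) : ℝ :=
  (∑ a ∈ G.verts, φ a) -
    ∑ e ∈ G.edges, Sym2.lift ⟨fun a b => φ (a ⊔ b), fun a b => by simp [sup_comm]⟩ e

/-- `H` is a path from `a` to `b`: a tree in `𝒯` whose only leaves are `a` and `b`
(the one-vertex tree `{a}` being a path from `a` to `a`). -/
def IsPathTree {L : Type*} [Lattice L] (H : FinTree L) (a b : L) : Prop :=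
  a ∈ H.verts ∧ b ∈ H.verts ∧
    ∀ x ∈ H.verts, (H.edges.filter (fun e => x ∈ e)).card ≤ 1 → x = a ∨ x = b

/-- `λ(φ; a, b)`: the maximum of `φ(H)` over paths `H` from `a` to `b`. -/
noncomputable def lam {L : Type*} [Lattice L] (φ : L → ℝ) (a b : L) : ℝ :=
  sSup {r : ℝ | ∃ H : FinTree L, IsPathTree H a b ∧ phiTree φ H = r}

/-- The successive λ-difference operator `Λ_{a_1,…,a_n} φ`, with
`Λ_a φ(x) = φ(x) − λ(φ; a, x)` and `Λ_{a_1,…,a_n} φ = Λ_{a_n}(Λ_{a_1,…,a_{n−1}} φ)`. -/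
noncomputable def lamSucc {L : Type*} [Lattice L] (φ : L → ℝ) (l : List L) : L → ℝ :=
  l.foldl (fun ψ a => fun x => ψ x - lam ψ a x) φ

/-- The contribution `φ (a ∨ b)` of the edge `{a, b}`, as a function on unordered pairs. -/
def supVal {L : Type*} [Lattice L] (φ : L → ℝ) : Sym2 L → ℝ :=
  Sym2.lift ⟨fun a b => φ (a ⊔ b), fun a b => by simp [sup_comm]⟩

lemma memL_pUp {L : Type*} [Lattice L] [Fintype L] (x : L) : MemL (pUp x) := by
  refine ⟨fun y z hy hz => ?_, x, by simp [pUp]⟩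
  simp only [pUp, Finset.mem_filter_univ] at hy ⊢
  exact hy.trans hz

lemma memL_upGen {L : Type*} [Lattice L] [Fintype L] {A : Finset L} (hA : A.Nonempty) :
    MemL (upGen A) := by
  constructor
  · intro y z hy hz
    simp only [upGen, Finset.mem_filter_univ] at hy ⊢
    obtain ⟨a, ha, hay⟩ := hy
    exact ⟨a, ha, hay.trans hz⟩
  · obtain ⟨a, ha⟩ := hA
    exact ⟨a, by simp only [upGen, Finset.mem_filter_univ]; exact ⟨a, ha, le_rfl⟩⟩

lemma upGen_singleton {L : Type*} [Lattice L] [Fintype L] (x : L) : upGen {x} = pUp x := by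
  ext y; simp [upGen, pUp]

/-- Attaching a vertex `a` to a vertex `b ∈ S` changes the value of `Φ` on the generated up-set by
at least `φ a - φ (a ∨ b)`, where `φ x = Φ ⟨x⟩*`. This is the second-order difference at
`⟨a ∨ b⟩*` in the directions `⟨a⟩*` and `⟨S⟩*`. -/
lemma phi_upGen_insert {L : Type*} [Lattice L] [Fintype L] [DecidableEq L]
    {Φ : Finset L → ℝ} (hΦ : Minf Φ) {S : Finset L} {a b : L} (hb : b ∈ S) :
    Φ (upGen S) + Φ (pUp a) - Φ (pUp (a ⊔ b)) ≤ Φ (upGen (insert a S)) := by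
  have h := hΦ [pUp a, upGen S] (by
    intro U hU
    simp only [List.mem_cons, List.not_mem_nil, or_false] at hU
    rcases hU with rfl | rfl
    · exact memL_pUp a
    · exact memL_upGen ⟨b, hb⟩) (pUp (a ⊔ b)) (memL_pUp _)
  have h₁ : pUp (a ⊔ b) ∪ pUp a = pUp a := by
    refine Finset.union_eq_right.2 fun y hy => ?_
    simp only [pUp, Finset.mem_filter_univ] at hy ⊢
    exact le_sup_left.trans hy
  have h₂ : pUp (a ⊔ b) ∪ upGen S = upGen S := by
    refine Finset.union_eq_right.2 fun y hy => ?_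
    simp only [pUp, upGen, Finset.mem_filter_univ] at hy ⊢
    exact ⟨b, hb, le_sup_right.trans hy⟩
  have h₃ : upGen S ∪ pUp a = upGen (insert a S) := by
    ext y
    simp only [pUp, upGen, Finset.mem_union, Finset.mem_filter_univ, Finset.exists_mem_insert]
    exact or_comm
  simp only [succDiffU, List.foldl_cons, List.foldl_nil, h₁, h₂, h₃] at h
  linarith

/-- For every `n` below the number of vertices, some `n + 1` vertices together with some of the
edges among them satisfy the tree inequality. -/
lemma exists_grow {L : Type*} [Lattice L] [Fintype L] [DecidableEq L]
    (φ : L → ℝ) (G : FinTree L) (Φ : Finset L → ℝ) (hΦ : Minf Φ)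
    (hmarg : ∀ x : L, Φ (pUp x) = φ x) (n : ℕ) (hn : n < G.verts.card) :
    ∃ S ⊆ G.verts, S.card = n + 1 ∧ ∃ F ⊆ G.edges, (∀ e ∈ F, ∀ x ∈ e, x ∈ S) ∧
      ∑ a ∈ S, φ a - ∑ e ∈ F, supVal φ e ≤ Φ (upGen S) := by
  induction n with
  | zero =>
    obtain ⟨r, hr⟩ := G.nonempty
    refine ⟨{r}, by simpa using hr, by simp, ∅, by simp, by simp, ?_⟩
    simp [upGen_singleton, hmarg]
  | succ n ih =>
    obtain ⟨S, hS, hcard, F, hF, hFS, hle⟩ := ih (by omega)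
    obtain ⟨x, hx⟩ : S.Nonempty := Finset.card_pos.1 (by omega)
    obtain ⟨y, hy, hyS⟩ := Finset.exists_mem_notMem_of_card_lt_card (hcard ▸ hn)
    obtain ⟨p⟩ := G.connected x (hS hx) y hy
    obtain ⟨d, -, hb, ha⟩ := p.exists_boundary_dart (S : Set L) hx hyS
    obtain ⟨⟨b, a⟩, hd⟩ := d
    simp only [Finset.mem_coe] at hb ha
    have hE : s(a, b) ∈ G.edges := by
      rw [Sym2.eq_swap]
      exact Finset.mem_coe.1 ((SimpleGraph.fromEdgeSet_adj _).1 hd).1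
    -- The crossing edge is new, since its endpoint `a` lies outside `S`.
    have hnew : s(a, b) ∉ F := fun h => ha (hFS _ h a (Sym2.mem_mk_left a b))
    refine ⟨insert a S, ?_, by rw [Finset.card_insert_of_notMem ha, hcard], insert s(a, b) F,
      ?_, ?_, ?_⟩
    · exact Finset.insert_subset (G.edge_mem _ hE a (Sym2.mem_mk_left a b)) hS
    · exact Finset.insert_subset hE hF
    · intro e he z hz
      rcases Finset.mem_insert.1 he with rfl | he
      · rcases Sym2.mem_iff.1 hz with rfl | rfl
        · exact Finset.mem_insert_self _ _
        · exact Finset.mem_insert_of_mem hb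
      · exact Finset.mem_insert_of_mem (hFS e he z hz)
    · rw [Finset.sum_insert ha, Finset.sum_insert hnew]
      have h := phi_upGen_insert hΦ (a := a) hb
      rw [hmarg, hmarg] at h
      have hval : supVal φ s(a, b) = φ (a ⊔ b) := rfl
      linarith

/-- For `φ ∈ M_1(L)` and any tree `G ∈ 𝒯`, `φ(G) ≤ B_φ(⟨G⟩*)`: the value `φ(G)` is a
lower bound for `Φ(⟨G⟩*)` over all `Φ ∈ M_∞(𝓛)` with `Π(Φ) = φ`, where `⟨G⟩*` is the
up-set generated by the vertex set of `G`. -/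
theorem stmt_9 {L : Type*} [Lattice L] [Fintype L] [BoundedOrder L] [DecidableEq L]
    (φ : L → ℝ) (hφ : M1 φ) (G : FinTree L)
    (Φ : Finset L → ℝ) (hΦ : Minf Φ) (hmarg : ∀ x : L, Φ (pUp x) = φ x) :
    phiTree φ G ≤ Φ (upGen G.verts) := by
  have hpos := G.nonempty.card_pos
  obtain ⟨S, hS, hcard, F, hF, -, hle⟩ :=
    exists_grow φ G Φ hΦ hmarg (G.verts.card - 1) (by omega)
  obtain rfl : S = G.verts := Finset.eq_of_subset_of_card_le hS (by omega)
  have hsum : ∑ e ∈ F, supVal φ e ≤ ∑ e ∈ G.edges, supVal φ e := by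
    refine Finset.sum_le_sum_of_subset_of_nonneg hF fun e _ _ => ?_
    induction e with
    | h a b => exact hφ.1 (a ⊔ b)
  have hG : phiTree φ G = ∑ a ∈ G.verts, φ a - ∑ e ∈ G.edges, supVal φ e := rfl
  linarith
end

section
/- Let L be a finite lattice and let φ : L → ℝ be nonnegative and completely monotone. Then for every n ≥ 1 and every a_1,…,a_n ∈ L, the successive λ-difference coincides with the successive difference: Λ_{a_1,…,a_n} φ = ∇_{a_1,…,a_n} φ. -/
/-!
The heart of the matter is the identity `λ(ψ; a, x) = ψ(x ∧ a)` for a nonnegative completely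
monotone `ψ`. Of complete monotonicity only two consequences are used: `ψ` is monotone, and `ψ` is
supermodular, i.e. `ψ a + ψ b ≤ ψ (a ∨ b) + ψ (a ∧ b)`.

*Upper bound* (`phiTree_le`). For every tree `G` and all vertices `a`, `b` of `G`,
`ψ(G) ≤ ψ(a ∧ b)`. The vertex set is explored one vertex at a time from a starting vertex, keeping
a lower bound `m` of the explored vertices for which the partial sum is at most `ψ m`. A new vertex
`c` attached to an explored `d ≥ m` adds
`ψ c - ψ (d ∨ c) ≤ ψ c - ψ (m ∨ c) ≤ ψ (m ∧ c) - ψ m`, so `m ∧ c` is the new lower bound.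

*Attainment* (`exists_path`). The star centred at `a ∧ x` with leaves `a` and `x` (those of them
distinct from the centre) is a path from `a` to `x` with value `ψ(a ∧ x)`, because each edge
`{v, a ∧ x}` contributes `-ψ(v)` and cancels its leaf.

Since `∇_a ψ` is again nonnegative and completely monotone, induction on the list of operators
finishes the proof.
-/

attribute [local instance 50] Classical.propDecidable

/-- The successive difference operator `∇_{a_1,…,a_n} φ` on `L`. -/
def succDiff {L : Type*} [Lattice L] (φ : L → ℝ) (l : List L) : L → ℝ :=
  l.foldl (fun ψ a => fun x => ψ x - ψ (x ⊓ a)) φ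

/-- `φ` is completely monotone: all successive differences (`n ≥ 1`) are nonnegative. -/
def CMono {L : Type*} [Lattice L] (φ : L → ℝ) : Prop :=
  ∀ l : List L, l ≠ [] → ∀ x, 0 ≤ succDiff φ l x

section Helpers

variable {L : Type*} [Lattice L]

/-- The value of `ψ` at the join of the two endpoints of an edge. -/
noncomputable def edgeVal (ψ : L → ℝ) (e : Sym2 L) : ℝ :=
  Sym2.lift ⟨fun a b => ψ (a ⊔ b), fun a b => by simp [sup_comm]⟩ e

lemma edgeVal_mk (ψ : L → ℝ) (a b : L) : edgeVal ψ s(a, b) = ψ (a ⊔ b) := rfl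

lemma edgeVal_nonneg {ψ : L → ℝ} (hpos : ∀ x, 0 ≤ ψ x) (e : Sym2 L) : 0 ≤ edgeVal ψ e := by
  induction e with
  | _ a b => exact hpos _

lemma phiTree_eq (ψ : L → ℝ) (G : FinTree L) :
    phiTree ψ G = (∑ a ∈ G.verts, ψ a) - ∑ e ∈ G.edges, edgeVal ψ e := rfl

lemma CMono.monotone {ψ : L → ℝ} (h : CMono ψ) : Monotone ψ := by
  intro a b hab
  have := h [a] (by simp) b
  simp only [succDiff, List.foldl_cons, List.foldl_nil, inf_eq_right.2 hab] at this
  linarith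

lemma CMono.supermodular {ψ : L → ℝ} (h : CMono ψ) (a b : L) :
    ψ a + ψ b ≤ ψ (a ⊔ b) + ψ (a ⊓ b) := by
  have := h [a, b] (by simp) (a ⊔ b)
  have h1 : (a ⊔ b) ⊓ a = a := by simp
  have h2 : (a ⊔ b) ⊓ b = b := by simp
  simp only [succDiff, List.foldl_cons, List.foldl_nil, h1, h2, inf_comm b a] at this
  linarith

lemma CMono.diff {ψ : L → ℝ} (h : CMono ψ) (a : L) :
    CMono (fun x => ψ x - ψ (x ⊓ a)) := by
  intro l _ x
  exact h (a :: l) (by simp) x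

/-- Exploration of a tree from a vertex `a`: every size `k + 1` up to that of the vertex set is
reached by some explored set `S` of vertices with a set `F` of edges inside `S`, whose partial sum
is bounded by `ψ m` for a lower bound `m` of `S`. -/
lemma exists_explored {ψ : L → ℝ} (h : CMono ψ) (G : FinTree L) {a : L} (ha : a ∈ G.verts)
    (k : ℕ) (hk : k + 1 ≤ G.verts.card) :
    ∃ S ⊆ G.verts, ∃ F ⊆ G.edges, ∃ m : L, a ∈ S ∧ S.card = k + 1 ∧
      (∀ e ∈ F, ∀ v ∈ e, v ∈ S) ∧ (∀ v ∈ S, m ≤ v) ∧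
      (∑ v ∈ S, ψ v) - ∑ e ∈ F, edgeVal ψ e ≤ ψ m := by
  induction k with
  | zero => exact ⟨{a}, by simpa using ha, ∅, by simp, a, by simp, by simp, by simp, by simp,
      by simp⟩
  | succ k ih =>
    obtain ⟨S, hS, F, hF, m, haS, hcard, hFS, hm, hle⟩ := ih (by omega)
    obtain ⟨b, hb, hbS⟩ : ∃ b ∈ G.verts, b ∉ S :=
      Finset.exists_mem_notMem_of_card_lt_card (by omega)
    obtain ⟨p⟩ := G.connected a ha b hb
    -- Some edge `s(d, c)` of a walk from `a` to `b` leaves the explored set.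
    obtain ⟨⟨⟨d, c⟩, hadj⟩, -, hd, hc⟩ := p.exists_boundary_dart (S : Set L) (by simpa) (by simpa)
    simp only [Finset.mem_coe] at hd hc
    rw [SimpleGraph.fromEdgeSet_adj] at hadj
    have hedge : s(d, c) ∈ G.edges := by simpa using hadj.1
    have hcv : c ∈ G.verts := G.edge_mem _ hedge c (by simp)
    have hnew : s(d, c) ∉ F := fun hmem => hc (hFS _ hmem c (by simp))
    refine ⟨insert c S, Finset.insert_subset hcv hS, insert s(d, c) F,
      Finset.insert_subset hedge hF, m ⊓ c, by simp [haS],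
      by rw [Finset.card_insert_of_notMem hc, hcard], ?_, ?_, ?_⟩
    · intro e he v hv
      rcases Finset.mem_insert.1 he with rfl | he
      · rcases Sym2.mem_iff.1 hv with rfl | rfl <;> simp [hd]
      · exact Finset.mem_insert_of_mem (hFS e he v hv)
    · intro v hv
      rcases Finset.mem_insert.1 hv with rfl | hv
      · exact inf_le_right
      · exact inf_le_left.trans (hm v hv)
    · rw [Finset.sum_insert hc, Finset.sum_insert hnew, edgeVal_mk]
      have h1 := h.supermodular m c
      have h2 : ψ (m ⊔ c) ≤ ψ (d ⊔ c) := h.monotone (sup_le_sup_right (hm d hd) c)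
      linarith

lemma phiTree_le {ψ : L → ℝ} (hpos : ∀ x, 0 ≤ ψ x) (h : CMono ψ) (G : FinTree L) {a b : L}
    (ha : a ∈ G.verts) (hb : b ∈ G.verts) : phiTree ψ G ≤ ψ (a ⊓ b) := by
  have hcard : 0 < G.verts.card := Finset.card_pos.2 G.nonempty
  obtain ⟨S, hS, F, hF, m, -, hSc, -, hm, hle⟩ :=
    exists_explored h G ha (G.verts.card - 1) (by omega)
  obtain rfl : S = G.verts := Finset.eq_of_subset_of_card_le hS (by omega)
  have h1 : ∑ e ∈ F, edgeVal ψ e ≤ ∑ e ∈ G.edges, edgeVal ψ e :=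
    Finset.sum_le_sum_of_subset_of_nonneg hF fun e _ _ => edgeVal_nonneg hpos e
  have h2 : ψ m ≤ ψ (a ⊓ b) := h.monotone (le_inf (hm a ha) (hm b hb))
  rw [phiTree_eq]
  linarith

/-- The star with centre `m` and set of leaves `P`. -/
noncomputable def starTree (m : L) (P : Finset L) (hm : m ∉ P) : FinTree L where
  verts := insert m P
  edges := P.image fun v => s(v, m)
  nonempty := by simp
  loopless := by
    intro e he
    obtain ⟨v, hv, rfl⟩ := Finset.mem_image.1 he
    rw [Sym2.mk_isDiag_iff]
    rintro rfl
    exact hm hv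
  edge_mem := by
    intro e he x hx
    obtain ⟨v, hv, rfl⟩ := Finset.mem_image.1 he
    rcases Sym2.mem_iff.1 hx with rfl | rfl <;> simp [hv]
  connected := by
    have key : ∀ x ∈ insert m P, (SimpleGraph.fromEdgeSet
        ((P.image fun v => s(v, m) : Finset (Sym2 L)) : Set (Sym2 L))).Reachable x m := by
      intro x hx
      rcases Finset.mem_insert.1 hx with rfl | hxP
      · exact SimpleGraph.Reachable.refl _
      · refine SimpleGraph.Adj.reachable ?_
        rw [SimpleGraph.fromEdgeSet_adj]
        refine ⟨Finset.mem_coe.2 (Finset.mem_image_of_mem _ hxP), ?_⟩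
        rintro rfl
        exact hm hxP
    exact fun x hx y hy => (key x hx).trans (key y hy).symm
  acyclic := by
    refine (SimpleGraph.isAcyclic_starGraph m).anti ?_
    intro x y hxy
    rw [SimpleGraph.fromEdgeSet_adj] at hxy
    obtain ⟨v, -, hv⟩ := Finset.mem_image.1 (Finset.mem_coe.1 hxy.1)
    rw [SimpleGraph.starGraph_adj]
    refine ⟨hxy.2, ?_⟩
    rcases Sym2.eq_iff.1 hv with ⟨-, h⟩ | ⟨-, h⟩
    · exact Or.inr h.symm
    · exact Or.inl h.symm

lemma phiTree_starTree (ψ : L → ℝ) {m : L} {P : Finset L} (hm : m ∉ P) (hle : ∀ v ∈ P, m ≤ v) :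
    phiTree ψ (starTree m P hm) = ψ m := by
  rw [phiTree_eq]
  simp only [starTree]
  rw [Finset.sum_insert hm, Finset.sum_image (fun x _ y _ hxy => Sym2.congr_left.1 hxy)]
  have : ∑ v ∈ P, edgeVal ψ s(v, m) = ∑ v ∈ P, ψ v :=
    Finset.sum_congr rfl fun v hv => by rw [edgeVal_mk, sup_eq_left.2 (hle v hv)]
  rw [this]
  ring

lemma exists_path (ψ : L → ℝ) (a x : L) :
    ∃ H : FinTree L, IsPathTree H a x ∧ phiTree ψ H = ψ (a ⊓ x) := by
  have hm : a ⊓ x ∉ (({a, x} : Finset L).erase (a ⊓ x)) := Finset.notMem_erase _ _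
  refine ⟨starTree (a ⊓ x) (({a, x} : Finset L).erase (a ⊓ x)) hm, ⟨?_, ?_, ?_⟩,
    phiTree_starTree ψ hm ?_⟩
  · by_cases h : a = a ⊓ x
    · exact Finset.mem_insert.2 (Or.inl h)
    · exact Finset.mem_insert_of_mem (Finset.mem_erase.2 ⟨h, by simp⟩)
  · by_cases h : x = a ⊓ x
    · exact Finset.mem_insert.2 (Or.inl h)
    · exact Finset.mem_insert_of_mem (Finset.mem_erase.2 ⟨h, by simp⟩)
  · intro v hv hcard
    by_contra! hne
    rcases Finset.mem_insert.1 hv with rfl | hv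
    · -- A centre different from `a` and `x` lies on the two edges to `a` and `x`.
      obtain ⟨hna, hnx⟩ := hne
      have hax : a ≠ x := by
        rintro rfl
        simp at hna
      have hE : ∀ w ∈ ({a, x} : Finset L), w ≠ a ⊓ x →
          s(w, a ⊓ x) ∈ (starTree (a ⊓ x) (({a, x} : Finset L).erase (a ⊓ x)) hm).edges.filter
            (fun e => a ⊓ x ∈ e) := fun w hw hne =>
        Finset.mem_filter.2 ⟨Finset.mem_image_of_mem _ (Finset.mem_erase.2 ⟨hne, hw⟩), by simp⟩
      have heq := Finset.card_le_one.1 hcard _ (hE a (by simp) hna.symm) _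
        (hE x (by simp) hnx.symm)
      exact hax (Sym2.congr_left.1 heq)
    · have := Finset.mem_of_mem_erase hv
      simp [hne.1, hne.2] at this
  · intro v hv
    have := Finset.mem_of_mem_erase hv
    rcases Finset.mem_insert.1 this with rfl | h
    · exact inf_le_left
    · rw [Finset.mem_singleton.1 h]
      exact inf_le_right

lemma lam_eq {ψ : L → ℝ} (hpos : ∀ x, 0 ≤ ψ x) (h : CMono ψ) (a x : L) :
    lam ψ a x = ψ (x ⊓ a) := by
  rw [inf_comm]
  have hgreatest : IsGreatest {r : ℝ | ∃ H : FinTree L, IsPathTree H a x ∧ phiTree ψ H = r}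
      (ψ (a ⊓ x)) := by
    refine ⟨exists_path ψ a x, ?_⟩
    rintro r ⟨H, hH, rfl⟩
    exact phiTree_le hpos h H hH.1 hH.2.1
  exact hgreatest.csSup_eq

lemma lamSucc_eq (l : List L) : ∀ {ψ : L → ℝ}, (∀ x, 0 ≤ ψ x) → CMono ψ →
    lamSucc ψ l = succDiff ψ l := by
  induction l with
  | nil => intro ψ _ _; rfl
  | cons a l ih =>
    intro ψ hpos h
    have hstep : (fun x => ψ x - lam ψ a x) = fun x => ψ x - ψ (x ⊓ a) :=
      funext fun x => by rw [lam_eq hpos h]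
    have := ih (fun x => h [a] (by simp) x) (h.diff a)
    change lamSucc (fun x => ψ x - lam ψ a x) l = succDiff (fun x => ψ x - ψ (x ⊓ a)) l
    rw [hstep]
    exact this

end Helpers

/-- For nonnegative completely monotone `φ`, the successive λ-difference coincides
with the successive difference: `Λ_{a_1,…,a_n} φ = ∇_{a_1,…,a_n} φ` for all `n ≥ 1`. -/
theorem stmt_15 {L : Type*} [Lattice L] [Fintype L] [BoundedOrder L]
    (φ : L → ℝ) (hpos : ∀ x, 0 ≤ φ x) (hcm : CMono φ)
    (l : List L) (hl : l ≠ []) :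
    ∀ x : L, lamSucc φ l x = succDiff φ l x :=
  fun x => congrFun (lamSucc_eq l hpos hcm) x
end
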